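/- There exists a positive constant C⋆ = C⋆(d) such that for every u ∈ H¹(ℝ^d) ∩ L¹((1+|x|)dx) with ∫_{ℝ^d} u dx = 0, one has ‖u‖²_{L²(dx)} ≤ C⋆ ‖x u‖_{L¹(dx)}^{4/(d+4)} ‖∇u‖_{L²(dx)}^{2(d+2)/(d+4)}. -/

import Mathlib

open MeasureTheory Real

noncomputable section

/-- One-dimensional estimate along a segment. -/
lemma nash_one_dim (f : ℝ → ℝ) (hf : Differentiable ℝ f) :
    ENNReal.ofReal ((f 1 - f 0) ^ 2) ≤
      ∫⁻ t in Set.Ioc (0 : ℝ) 1, ENNReal.ofReal ((deriv f t) ^ 2) := by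
  by_cases htop : ∫⁻ t in Set.Ioc (0 : ℝ) 1, ENNReal.ofReal ((deriv f t) ^ 2) = ⊤
  · rw [htop]; exact le_top
  have hm : Measurable (deriv f) := measurable_deriv f
  have : IsProbabilityMeasure (volume.restrict (Set.Ioc (0 : ℝ) 1)) := ⟨by simp⟩
  have hint2 : Integrable (fun t => (deriv f t) ^ 2) (volume.restrict (Set.Ioc (0 : ℝ) 1)) := by
    refine ⟨(hm.pow_const 2).aestronglyMeasurable, ?_⟩
    rw [hasFiniteIntegral_iff_ofReal (Filter.Eventually.of_forall fun t => sq_nonneg _)]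
    exact lt_top_iff_ne_top.2 htop
  have hmem : MemLp (deriv f) 2 (volume.restrict (Set.Ioc (0 : ℝ) 1)) :=
    (memLp_two_iff_integrable_sq hm.aestronglyMeasurable).2 hint2
  have hint : Integrable (deriv f) (volume.restrict (Set.Ioc (0 : ℝ) 1)) :=
    hmem.integrable (by norm_num)
  have hftc : ∫ t in (0 : ℝ)..1, deriv f t = f 1 - f 0 :=
    intervalIntegral.integral_eq_sub_of_hasDerivAt (fun x _ => (hf x).hasDerivAt)
      ((intervalIntegrable_iff_integrableOn_Ioc_of_le zero_le_one).2 hint)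
  rw [intervalIntegral.integral_of_le zero_le_one] at hftc
  have hj := ConvexOn.map_integral_le (μ := volume.restrict (Set.Ioc (0 : ℝ) 1))
    (s := Set.univ) (f := deriv f) (g := fun x => x ^ 2) (even_two.convexOn_pow)
    (by fun_prop) isClosed_univ (by simp) hint hint2
  rw [← ofReal_integral_eq_lintegral_ofReal hint2
    (Filter.Eventually.of_forall fun t => sq_nonneg _), ← hftc]
  exact ENNReal.ofReal_le_ofReal hj

/-- Difference quotient estimate. -/
lemma nash_translate {d : ℕ} (u : EuclideanSpace ℝ (Fin d) → ℝ) (hu : Differentiable ℝ u)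
    (hG : Integrable (fun x => ‖fderiv ℝ u x‖ ^ 2)) (z : EuclideanSpace ℝ (Fin d))
    (hI : Integrable (fun x => (u x - u (x - z)) ^ 2)) :
    ∫ x, (u x - u (x - z)) ^ 2 ≤ ‖z‖ ^ 2 * ∫ x, ‖fderiv ℝ u x‖ ^ 2 := by
  have hGn : 0 ≤ ∫ x, ‖fderiv ℝ u x‖ ^ 2 := integral_nonneg fun x => by positivity
  have hmeas : Measurable (fun x => ENNReal.ofReal (‖z‖ ^ 2 * ‖fderiv ℝ u x‖ ^ 2)) := by
    have := measurable_fderiv ℝ u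
    fun_prop
  have hpt : ∀ x, ENNReal.ofReal ((u x - u (x - z)) ^ 2) ≤
      ∫⁻ t in Set.Ioc (0 : ℝ) 1, ENNReal.ofReal (‖z‖ ^ 2 * ‖fderiv ℝ u (x - t • z)‖ ^ 2) := by
    intro x
    have hd : ∀ t : ℝ, HasDerivAt (fun t : ℝ => u (x - t • z)) (fderiv ℝ u (x - t • z) (-z)) t := by
      intro t
      have h1 : HasDerivAt (fun t : ℝ => x - t • z) (-z) t := by
        simpa using ((hasDerivAt_id t).smul_const z).const_sub x
      exact (hu (x - t • z)).hasFDerivAt.comp_hasDerivAt t h1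
    have h := nash_one_dim (fun t : ℝ => u (x - t • z)) (fun t => (hd t).differentiableAt)
    have e : (u x - u (x - z)) ^ 2 = (u (x - (1 : ℝ) • z) - u (x - (0 : ℝ) • z)) ^ 2 := by
      simp; ring
    rw [e]
    refine h.trans (lintegral_mono fun t => ENNReal.ofReal_le_ofReal ?_)
    rw [(hd t).deriv, ← sq_abs, ← Real.norm_eq_abs, ← mul_pow]
    have := (fderiv ℝ u (x - t • z)).le_opNorm (-z)
    rw [norm_neg, mul_comm] at this
    gcongr
  have hmain : ∫⁻ x, ENNReal.ofReal ((u x - u (x - z)) ^ 2) ≤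
      ∫⁻ x, ENNReal.ofReal (‖z‖ ^ 2 * ‖fderiv ℝ u x‖ ^ 2) := by
    refine (lintegral_mono hpt).trans ?_
    rw [lintegral_lintegral_swap]
    · have : ∀ t : ℝ, ∫⁻ x, ENNReal.ofReal (‖z‖ ^ 2 * ‖fderiv ℝ u (x - t • z)‖ ^ 2)
          = ∫⁻ x, ENNReal.ofReal (‖z‖ ^ 2 * ‖fderiv ℝ u x‖ ^ 2) := fun t =>
        lintegral_sub_right_eq_self
          (fun x => ENNReal.ofReal (‖z‖ ^ 2 * ‖fderiv ℝ u x‖ ^ 2)) (t • z)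
      simp_rw [this]
      simp
    · refine Measurable.aemeasurable ?_
      exact hmeas.comp (f := fun p : EuclideanSpace ℝ (Fin d) × ℝ => p.1 - p.2 • z)
        (by fun_prop)
  rw [← ofReal_integral_eq_lintegral_ofReal hI
    (Filter.Eventually.of_forall fun t => sq_nonneg _),
    ← ofReal_integral_eq_lintegral_ofReal (hG.const_mul _)
    (Filter.Eventually.of_forall fun t => by positivity), integral_const_mul] at hmain
  exact (ENNReal.ofReal_le_ofReal_iff (by positivity)).1 hmain

/-- Second difference bound for a compactly supported smooth function. -/
lemma nash_second_diff {d : ℕ} (φ : EuclideanSpace ℝ (Fin d) → ℝ) (hφ : ContDiff ℝ 2 φ)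
    (hc : HasCompactSupport φ) :
    ∃ K : ℝ, 0 < K ∧ ∀ x y, |φ (x - y) - φ x - φ (-y) + φ 0| ≤ K * ‖x‖ * ‖y‖ := by
  have h1 : ContDiff ℝ 1 (fderiv ℝ φ) := hφ.fderiv_right (by norm_num)
  obtain ⟨C, hC⟩ := ContDiff.lipschitzWith_of_hasCompactSupport (hc.fderiv ℝ) h1 (by norm_num)
  have hdφ : Differentiable ℝ φ := hφ.differentiable (by norm_num)
  refine ⟨C + 1, by positivity, fun x y => ?_⟩
  have hd : ∀ w, HasFDerivAt (fun w => φ (w - y) - φ w)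
      (fderiv ℝ φ (w - y) - fderiv ℝ φ w) w := by
    intro w
    refine HasFDerivAt.sub ?_ (hdφ w).hasFDerivAt
    have := (hdφ (w - y)).hasFDerivAt.comp w ((hasFDerivAt_id w).sub_const y)
    simp only [ContinuousLinearMap.comp_id] at this
    exact this
  have key := Convex.norm_image_sub_le_of_norm_fderiv_le (𝕜 := ℝ) (C := (C : ℝ) * ‖y‖)
    (f := fun w => φ (w - y) - φ w) (s := Set.univ) (x := 0) (y := x)
    (fun w _ => (hd w).differentiableAt) (fun w _ => by
      rw [(hd w).fderiv]
      have := hC.dist_le_mul (w - y) w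
      simpa [dist_eq_norm] using this) convex_univ trivial trivial
  rw [Real.norm_eq_abs] at key
  have e : φ (x - y) - φ x - φ (-y) + φ 0 = φ (x - y) - φ x - (φ (0 - y) - φ 0) := by
    simp; ring
  rw [e]
  refine key.trans ?_
  rw [sub_zero]
  nlinarith [mul_nonneg (norm_nonneg x) (norm_nonneg y)]

/-- The unscaled inequality. -/
lemma nash_unscaled (d : ℕ) : ∃ K : ℝ, 0 < K ∧
    ∀ u : EuclideanSpace ℝ (Fin d) → ℝ,
        Differentiable ℝ u →
        Integrable (fun x => u x ^ 2) →
        Integrable (fun x => ‖fderiv ℝ u x‖ ^ 2) →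
        Integrable u →
        Integrable (fun x => ‖x‖ * |u x|) →
        (∫ x, u x) = 0 →
        (∫ x, u x ^ 2) ≤ (∫ x, ‖fderiv ℝ u x‖ ^ 2) + K * (∫ x, ‖x‖ * |u x|) ^ 2 := by
  let b : ContDiffBump (0 : EuclideanSpace ℝ (Fin d)) := ⟨1 / 2, 1, by norm_num, by norm_num⟩
  set φ : EuclideanSpace ℝ (Fin d) → ℝ := b.normed volume with hφdef
  have hφ0 : ∀ x, 0 ≤ φ x := fun x => b.nonneg_normed x
  have hφ1 : ∫ x, φ x = 1 := b.integral_normed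
  have hφs : ∀ x, φ x ≠ 0 → ‖x‖ ≤ 1 := by
    intro x hx
    have : x ∈ Function.support φ := hx
    rw [hφdef, b.support_normed_eq] at this
    simpa using (mem_ball_zero_iff.1 this).le
  have hφc : HasCompactSupport φ := b.hasCompactSupport_normed
  have hφd : ContDiff ℝ 2 φ := b.contDiff_normed (n := 2)
  have hφi : Integrable φ := hφd.continuous.integrable_of_hasCompactSupport hφc
  obtain ⟨B, hB⟩ := hφc.exists_bound_of_continuous hφd.continuous
  obtain ⟨K, hK, hKb⟩ := nash_second_diff φ hφd hφc
  clear_value φ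
  refine ⟨K, hK, fun u hu hu2 hG hui hM h0 => ?_⟩
  set U := ∫ x, u x ^ 2 with hU
  set G := ∫ x, ‖fderiv ℝ u x‖ ^ 2 with hGdef
  set M := ∫ x, ‖x‖ * |u x| with hMdef
  have hGn : 0 ≤ G := integral_nonneg fun x => by positivity
  have hucont : Continuous u := hu.continuous
  have hmem : MemLp u 2 volume :=
    (memLp_two_iff_integrable_sq hucont.aestronglyMeasurable).2 hu2
  -- step 1
  have step1 : ∀ z, ‖z‖ ≤ 1 → U - G ≤ ∫ x, u x * u (x - z) := by
    intro z hz
    have hu2' : Integrable (fun x => u (x - z) ^ 2) := hu2.comp_sub_right z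
    have hmem' : MemLp (fun x => u (x - z)) 2 volume :=
      (memLp_two_iff_integrable_sq (by fun_prop)).2 hu2'
    have hprod : Integrable (fun x => u x * u (x - z)) := hmem.integrable_mul hmem'
    have hexp : (fun x => (u x - u (x - z)) ^ 2)
        = fun x => u x ^ 2 + u (x - z) ^ 2 - 2 * (u x * u (x - z)) := by
      funext x; ring
    have hI : Integrable (fun x => (u x - u (x - z)) ^ 2) := by
      rw [hexp]; exact (hu2.add hu2').sub (hprod.const_mul 2)
    have ht := nash_translate u hu hG z hI
    have hval : ∫ x, (u x - u (x - z)) ^ 2 = U + U - 2 * ∫ x, u x * u (x - z) := by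
      have hadd : Integrable (fun x => u x ^ 2 + u (x - z) ^ 2) := hu2.add hu2'
      rw [hexp, integral_sub hadd (hprod.const_mul 2), integral_add hu2 hu2',
        integral_const_mul, integral_sub_right_eq_self (fun x => u x ^ 2) z]
    have hz2 : ‖z‖ ^ 2 * G ≤ G := by
      have : ‖z‖ ^ 2 ≤ 1 := by nlinarith [norm_nonneg z]
      nlinarith
    rw [hval] at ht
    linarith
  -- integrability on the product
  have hprodint : Integrable (fun p : EuclideanSpace ℝ (Fin d) × EuclideanSpace ℝ (Fin d) =>
      φ p.1 * (u p.2 * u (p.2 - p.1))) (volume.prod volume) := by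
    have h := Integrable.convolution_integrand (ContinuousLinearMap.mul ℝ ℝ)
      (μ := (volume : Measure (EuclideanSpace ℝ (Fin d))))
      (ν := (volume : Measure (EuclideanSpace ℝ (Fin d)))) hui hui.comp_neg
    have h' : Integrable (fun p : EuclideanSpace ℝ (Fin d) × EuclideanSpace ℝ (Fin d) =>
      (u p.2 * u (p.2 - p.1))) (volume.prod volume) := by
      simpa using h
    refine h'.bdd_mul (c := B) ?_ (Filter.Eventually.of_forall fun p => hB p.1)
    exact (hφd.continuous.comp continuous_fst).aestronglyMeasurable
  have step2 : U - G ≤ ∫ z, ∫ x, φ z * (u x * u (x - z)) := by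
    have : U - G = ∫ z, φ z * (U - G) := by rw [integral_mul_const, hφ1, one_mul]
    rw [this]
    refine integral_mono (hφi.mul_const _) hprodint.integral_prod_left fun z => ?_
    simp only
    rw [integral_const_mul]
    by_cases hz : φ z = 0
    · simp [hz]
    · exact mul_le_mul_of_nonneg_left (step1 z (hφs z hz)) (hφ0 z)
  rw [integral_integral_swap hprodint] at step2
  set g : EuclideanSpace ℝ (Fin d) → ℝ := fun x => ∫ y, φ (x - y) * u y with hg
  have hin : ∀ x, ∫ z, φ z * (u x * u (x - z)) = u x * g x := by
    intro x
    rw [hg]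
    simp only
    rw [← integral_const_mul, ← integral_sub_left_eq_self _ volume x]
    congr 1; funext y
    simp; ring
  have hugint : Integrable (fun x => u x * g x) := by
    have := hprodint.integral_prod_right
    simpa only [hin] using this
  simp_rw [hin] at step2
  have hφu : ∀ x, Integrable (fun y => φ (x - y) * u y) := fun x =>
    hui.bdd_mul (c := B) (hφd.continuous.comp (by fun_prop)).aestronglyMeasurable
      (Filter.Eventually.of_forall fun p => hB _)
  have hgdiff : ∀ x, |g x - g 0| ≤ K * ‖x‖ * M := by
    intro x
    have e : g x - g 0 = ∫ y, (φ (x - y) - φ x - φ (-y) + φ 0) * u y := by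
      have e1 : (fun y => (φ (x - y) - φ x - φ (-y) + φ 0) * u y)
          = fun y => (φ (x - y) * u y - φ (0 - y) * u y) - (φ x - φ 0) * u y := by
        funext y; simp; ring
      have hs : Integrable (fun y => φ (x - y) * u y - φ (0 - y) * u y) := (hφu x).sub (hφu 0)
      rw [e1, integral_sub hs (hui.const_mul _), integral_sub (hφu x) (hφu 0),
        integral_const_mul, h0]
      simp [hg]
    rw [e, hMdef, ← integral_const_mul, ← Real.norm_eq_abs]
    refine norm_integral_le_of_norm_le (hM.const_mul _) (Filter.Eventually.of_forall fun y => ?_)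
    rw [Real.norm_eq_abs, abs_mul, ← mul_assoc]
    exact mul_le_mul_of_nonneg_right (hKb x y) (abs_nonneg _)
  have step3 : ∫ x, u x * g x ≤ K * M ^ 2 := by
    have e : ∫ x, u x * g x = ∫ x, u x * (g x - g 0) := by
      have e1 : (fun x => u x * (g x - g 0)) = fun x => u x * g x - u x * g 0 := by
        funext x; ring
      rw [e1, integral_sub hugint (hui.mul_const _), integral_mul_const, h0]; simp
    have e2 : K * M ^ 2 = ∫ x, (K * M) * (‖x‖ * |u x|) := by
      rw [integral_const_mul]; ring
    rw [e, e2]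
    refine (le_abs_self _).trans ?_
    rw [← Real.norm_eq_abs]
    refine norm_integral_le_of_norm_le (hM.const_mul _) (Filter.Eventually.of_forall fun y => ?_)
    rw [Real.norm_eq_abs, abs_mul]
    have := mul_le_mul_of_nonneg_left (hgdiff y) (abs_nonneg (u y))
    linarith
  linarith

/-- The scaled inequality. -/
lemma nash_scaled (d : ℕ) : ∃ K : ℝ, 0 < K ∧
    ∀ u : EuclideanSpace ℝ (Fin d) → ℝ,
        Differentiable ℝ u →
        Integrable (fun x => u x ^ 2) →
        Integrable (fun x => ‖fderiv ℝ u x‖ ^ 2) →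
        Integrable u →
        Integrable (fun x => ‖x‖ * |u x|) →
        (∫ x, u x) = 0 →
        ∀ r : ℝ, 0 < r →
        (∫ x, u x ^ 2) ≤ r ^ 2 * (∫ x, ‖fderiv ℝ u x‖ ^ 2)
          + K * (r ^ (d + 2))⁻¹ * (∫ x, ‖x‖ * |u x|) ^ 2 := by
  obtain ⟨K, hK, h⟩ := nash_unscaled d
  refine ⟨K, hK, fun u hu hu2 hG hui hM h0 r hr => ?_⟩
  have hfd : ∀ x, ‖fderiv ℝ (fun x => u (r • x)) x‖ ^ 2 = r ^ 2 * ‖fderiv ℝ u (r • x)‖ ^ 2 := by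
    intro x
    rw [fderiv_comp_smul, norm_smul, mul_pow, Real.norm_eq_abs, sq_abs]
  have hMr : ∀ x, ‖x‖ * |u (r • x)| = r⁻¹ * (‖r • x‖ * |u (r • x)|) := by
    intro x
    rw [norm_smul, Real.norm_eq_abs, abs_of_pos hr]
    field_simp
  have hrd : |(r ^ d)⁻¹| = (r ^ d)⁻¹ := abs_of_pos (by positivity)
  have key := h (fun x => u (r • x)) (hu.comp (by fun_prop)) (hu2.comp_smul hr.ne')
    (by simp_rw [hfd]; exact (hG.comp_smul hr.ne').const_mul _)
    (hui.comp_smul hr.ne')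
    (by simp_rw [hMr]; exact (hM.comp_smul hr.ne').const_mul _)
    (by rw [Measure.integral_comp_smul, h0, smul_zero])
  simp_rw [hfd, hMr, integral_const_mul] at key
  rw [Measure.integral_comp_smul volume (fun x => u x ^ 2) r,
    Measure.integral_comp_smul volume (fun x => ‖fderiv ℝ u x‖ ^ 2) r,
    Measure.integral_comp_smul volume (fun x => ‖x‖ * |u x|) r] at key
  simp only [finrank_euclideanSpace, Fintype.card_fin, hrd, smul_eq_mul] at key
  have hp : 0 < r ^ d := by positivity
  have key2 := mul_le_mul_of_nonneg_left key hp.le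
  calc _ = r ^ d * ((r ^ d)⁻¹ * ∫ x, u x ^ 2) := by field_simp
    _ ≤ _ := key2
    _ = _ := by rw [pow_add]; field_simp

/-- Optimization in the scale. -/
lemma nash_opt (d : ℕ) (U K G M : ℝ) (hG : 0 < G) (hM : 0 < M)
    (h : ∀ r : ℝ, 0 < r → U ≤ r ^ 2 * G + K * (r ^ (d + 2))⁻¹ * M ^ 2) :
    U ≤ (1 + K) * M ^ ((4 : ℝ) / ((d : ℝ) + 4)) * G ^ (((d : ℝ) + 2) / ((d : ℝ) + 4)) := by
  have hd : (0 : ℝ) < (d : ℝ) + 4 := by positivity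
  have hr : 0 < M ^ ((2 : ℝ) / ((d : ℝ) + 4)) * G ^ (-(1 : ℝ) / ((d : ℝ) + 4)) := by positivity
  refine (h _ hr).trans (le_of_eq ?_)
  have e1 : (M ^ ((2 : ℝ) / ((d : ℝ) + 4)) * G ^ (-(1 : ℝ) / ((d : ℝ) + 4))) ^ 2 * G
      = M ^ ((4 : ℝ) / ((d : ℝ) + 4)) * G ^ (((d : ℝ) + 2) / ((d : ℝ) + 4)) := by
    rw [mul_pow, ← rpow_natCast, ← rpow_natCast, ← rpow_mul hM.le, ← rpow_mul hG.le, mul_assoc,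
      ← rpow_add_one hG.ne']
    congr 2
    · push_cast; ring
    · push_cast; field_simp; ring
  have e2 : ((M ^ ((2 : ℝ) / ((d : ℝ) + 4)) * G ^ (-(1 : ℝ) / ((d : ℝ) + 4))) ^ (d + 2))⁻¹ * M ^ 2
      = M ^ ((4 : ℝ) / ((d : ℝ) + 4)) * G ^ (((d : ℝ) + 2) / ((d : ℝ) + 4)) := by
    rw [mul_pow, ← rpow_natCast, ← rpow_natCast, ← rpow_mul hM.le, ← rpow_mul hG.le, mul_inv,
      ← rpow_neg hM.le, ← rpow_neg hG.le, ← rpow_natCast M 2, mul_right_comm, ← rpow_add hM]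
    congr 2
    · push_cast; field_simp; ring
    · push_cast; field_simp
  rw [e1, mul_assoc K, e2]; ring

/-- Improved Nash inequality: there is C⋆ = C⋆(d) > 0 such that for every
u ∈ H¹(ℝ^d) ∩ L¹((1+|x|)dx) with ∫ u dx = 0,
‖u‖²_{L²} ≤ C⋆ ‖x u‖_{L¹}^{4/(d+4)} ‖∇u‖_{L²}^{2(d+2)/(d+4)}. -/
theorem stmt_12 (d : ℕ) (hd : 0 < d) :
    ∃ C : ℝ, 0 < C ∧
      ∀ u : EuclideanSpace ℝ (Fin d) → ℝ,
        Differentiable ℝ u →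
        Integrable (fun x => u x ^ 2) →
        Integrable (fun x => ‖gradient u x‖ ^ 2) →
        Integrable u →
        Integrable (fun x => ‖x‖ * |u x|) →
        (∫ x, u x) = 0 →
        (∫ x, u x ^ 2) ≤
          C * (∫ x, ‖x‖ * |u x|) ^ ((4 : ℝ) / ((d : ℝ) + 4))
            * (∫ x, ‖gradient u x‖ ^ 2) ^ (((d : ℝ) + 2) / ((d : ℝ) + 4)) := by
  obtain ⟨K, hK, h⟩ := nash_scaled d
  refine ⟨1 + K, by positivity, fun u hu hu2 hG hui hM h0 => ?_⟩
  have hgn : ∀ x, ‖gradient u x‖ = ‖fderiv ℝ u x‖ := fun x => by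
    rw [gradient, LinearIsometryEquiv.norm_map]
  simp_rw [hgn] at hG ⊢
  have key := h u hu hu2 hG hui hM h0
  set U := ∫ x, u x ^ 2
  set G := ∫ x, ‖fderiv ℝ u x‖ ^ 2 with hGdef
  set M := ∫ x, ‖x‖ * |u x| with hMdef
  have hGn : 0 ≤ G := integral_nonneg fun x => by positivity
  have hMn : 0 ≤ M := integral_nonneg fun x => by positivity
  have hε : ∀ ε : ℝ, 0 < ε → U ≤ (1 + K) * (M + ε) ^ ((4 : ℝ) / ((d : ℝ) + 4))
      * (G + ε) ^ (((d : ℝ) + 2) / ((d : ℝ) + 4)) := by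
    intro ε hε
    refine nash_opt d U K (G + ε) (M + ε) (by positivity) (by positivity) fun r hr => ?_
    refine (key r hr).trans ?_
    gcongr <;> linarith
  have hcont : Continuous (fun ε : ℝ => (1 + K) * (M + ε) ^ ((4 : ℝ) / ((d : ℝ) + 4))
      * (G + ε) ^ (((d : ℝ) + 2) / ((d : ℝ) + 4))) := by
    refine (continuous_const.mul (Continuous.rpow_const (by fun_prop) fun _ => Or.inr ?_)).mul
      (Continuous.rpow_const (by fun_prop) fun _ => Or.inr ?_) <;> positivity
  have hlim := (hcont.tendsto 0).mono_left (nhdsWithin_le_nhds (s := Set.Ioi 0))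
  simp only [add_zero] at hlim
  exact ge_of_tendsto hlim (eventually_nhdsWithin_of_forall fun ε he => hε ε he)
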